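/- Let a_n = 2^{−nⁿ·n³} and F = (⋃_{n∈ℕ} [a_{2n}/2, a_{2n}]×{0}) ∪ (⋃_{n∈ℕ} {0}×[a_{2n−1}/2, a_{2n−1}]) ⊂ ℝ². Then M_p^1(F) < ∞ for every p ∈ (0,∞). -/

import Mathlib

open MeasureTheory Metric Set Filter
open scoped ENNReal Topology Classical

noncomputable section

/-- The affine line through `x` and `y`. -/
def lineThrough {n : ℕ} (x y : EuclideanSpace ℝ (Fin n)) : Set (EuclideanSpace ℝ (Fin n)) :=
  {p | ∃ t : ℝ, p = x + t • (y - x)}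

/-- The inverse circumradius `κ(x,y,z)` of a triple of points, set to `0` when the
points are not pairwise distinct. -/
def kappa {n : ℕ} (x y z : EuclideanSpace ℝ (Fin n)) : ℝ≥0∞ :=
  if x ≠ y ∧ y ≠ z ∧ x ≠ z then
    ENNReal.ofReal (2 * Metric.infDist z (lineThrough x y) / (‖x - z‖ * ‖y - z‖))
  else 0

/-- `κ_G(x) = sup_{v,w ∈ X} κ(x,v,w)`. -/
def kappaG {n : ℕ} (X : Set (EuclideanSpace ℝ (Fin n))) (x : EuclideanSpace ℝ (Fin n)) : ℝ≥0∞ :=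
  ⨆ v ∈ X, ⨆ w ∈ X, kappa x v w

/-- `κ_i(x,y) = sup_{z ∈ X} κ(x,y,z)`. -/
def kappaI {n : ℕ} (X : Set (EuclideanSpace ℝ (Fin n))) (x y : EuclideanSpace ℝ (Fin n)) : ℝ≥0∞ :=
  ⨆ z ∈ X, kappa x y z

/-- The energy `U_p^α(X) = ∫_X κ_G(x)^p dH^α(x)`. -/
def energyU {n : ℕ} (p α : ℝ) (X : Set (EuclideanSpace ℝ (Fin n))) : ℝ≥0∞ :=
  ∫⁻ x in X, kappaG X x ^ p ∂ μH[α]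

/-- The energy `I_p^α(X) = ∫_X ∫_X κ_i(x,y)^p dH^α(x) dH^α(y)`. -/
def energyI {n : ℕ} (p α : ℝ) (X : Set (EuclideanSpace ℝ (Fin n))) : ℝ≥0∞ :=
  ∫⁻ y in X, ∫⁻ x in X, kappaI X x y ^ p ∂ μH[α] ∂ μH[α]

/-- The integral Menger curvature `M_p^α(X)`. -/
def energyM {n : ℕ} (p α : ℝ) (X : Set (EuclideanSpace ℝ (Fin n))) : ℝ≥0∞ :=
  ∫⁻ z in X, ∫⁻ y in X, ∫⁻ x in X, kappa x y z ^ p ∂ μH[α] ∂ μH[α] ∂ μH[α]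

/-- The open double cone about `x` in direction `s` with opening angle `ε`. -/
def cone {n : ℕ} (s : EuclideanSpace ℝ (Fin n)) (ε : ℝ) (x : EuclideanSpace ℝ (Fin n)) :
    Set (EuclideanSpace ℝ (Fin n)) :=
  {y | y ≠ x ∧
    min (InnerProductGeometry.angle (y - x) s) (InnerProductGeometry.angle (y - x) (-s)) < ε}

/-- `X` has an approximate `α`-tangent at `x`. -/
def HasApproxTangent {n : ℕ} (α : ℝ) (X : Set (EuclideanSpace ℝ (Fin n)))
    (x : EuclideanSpace ℝ (Fin n)) : Prop :=
  ∃ s : EuclideanSpace ℝ (Fin n), ‖s‖ = 1 ∧ ∀ ε > (0:ℝ),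
    Filter.Tendsto
      (fun r : ℝ => μH[α] ((X \ cone s ε x) ∩ Metric.closedBall x r) / ENNReal.ofReal (2 * r) ^ α)
      (𝓝[>] 0) (𝓝 0)

/-- `X` has a weak approximate `α`-tangent at `x`. -/
def HasWeakApproxTangent {n : ℕ} (α : ℝ) (X : Set (EuclideanSpace ℝ (Fin n)))
    (x : EuclideanSpace ℝ (Fin n)) : Prop :=
  ∃ ρ > (0:ℝ), ∃ s : ℝ → EuclideanSpace ℝ (Fin n), (∀ r ∈ Set.Ioo (0:ℝ) ρ, ‖s r‖ = 1) ∧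
    ∀ ε > (0:ℝ),
      Filter.Tendsto
        (fun r : ℝ =>
          μH[α] ((X \ cone (s r) ε x) ∩ Metric.closedBall x r) / ENNReal.ofReal (2 * r) ^ α)
        (𝓝[>] 0) (𝓝 0)

/-- Lower `α`-density of `X` at `x`. -/
def lowerDensity {n : ℕ} (α : ℝ) (X : Set (EuclideanSpace ℝ (Fin n)))
    (x : EuclideanSpace ℝ (Fin n)) : ℝ≥0∞ :=
  Filter.liminf
    (fun r : ℝ => μH[α] (X ∩ Metric.closedBall x r) / ENNReal.ofReal (2 * r) ^ α) (𝓝[>] 0)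

/-- Upper `α`-density of `X` at `x`. -/
def upperDensity {n : ℕ} (α : ℝ) (X : Set (EuclideanSpace ℝ (Fin n)))
    (x : EuclideanSpace ℝ (Fin n)) : ℝ≥0∞ :=
  Filter.limsup
    (fun r : ℝ => μH[α] (X ∩ Metric.closedBall x r) / ENNReal.ofReal (2 * r) ^ α) (𝓝[>] 0)


/-- `a_n = 2 ^ (-(n^n * n^3))`. -/
def aseq (n : ℕ) : ℝ := ((2 : ℝ) ^ (n ^ n * n ^ 3))⁻¹

/-- The set `F = (⋃_{n ≥ 1} [a_{2n}/2, a_{2n}] × {0}) ∪ (⋃_{n ≥ 1} {0} × [a_{2n-1}/2, a_{2n-1}])`. -/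
def Fset : Set (EuclideanSpace ℝ (Fin 2)) :=
  {p | ∃ n : ℕ, 1 ≤ n ∧ p 1 = 0 ∧ p 0 ∈ Set.Icc (aseq (2 * n) / 2) (aseq (2 * n))} ∪
  {p | ∃ n : ℕ, 1 ≤ n ∧ p 0 = 0 ∧ p 1 ∈ Set.Icc (aseq (2 * n - 1) / 2) (aseq (2 * n - 1))}

/-!
The curvature `κ(x, y, z)` vanishes on collinear triples and is always at most `2 / ‖x - z‖` and
at most `2 / ‖y - z‖`. A triple in `F` which is not contained in one coordinate axis has `z` on a
different axis than `x` or than `y`, and two points on different axes have distance at least the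
larger of their norms. They also lie in segments `[a_m / 2, a_m]`, `[a_n / 2, a_n]` with, say,
`m < n`, and then `a_n = O(a_m ^ q)` for every `q`, so that any negative power of the larger norm
is dominated by an arbitrarily small negative power of the smaller one. Hence `κ ^ p` is bounded
by a constant times `W x * W y * W z` with `W x = 1 + ‖x‖ ^ (-s)` for some `s < 1`, and `W` is
integrable over `F` because `∑ a_n ^ (1 - s)` converges.
-/

section Kappa

variable {d : ℕ} {x y z : EuclideanSpace ℝ (Fin d)}

lemma right_mem_lineThrough : y ∈ lineThrough x y := ⟨1, by simp⟩

lemma lineThrough_subset_swap : lineThrough x y ⊆ lineThrough y x := by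
  rintro _ ⟨t, rfl⟩
  exact ⟨1 - t, by module⟩

lemma lineThrough_comm : lineThrough x y = lineThrough y x :=
  lineThrough_subset_swap.antisymm lineThrough_subset_swap

lemma kappa_comm : kappa x y z = kappa y x z := by
  unfold kappa
  rw [lineThrough_comm, mul_comm ‖x - z‖]
  congr 1
  grind

lemma kappa_eq_zero_of_mem_lineThrough (hz : z ∈ lineThrough x y) : kappa x y z = 0 := by
  simp [kappa, infDist_zero_of_mem hz]

lemma kappa_le_two_div_edist_left : kappa x y z ≤ 2 / edist x z := by
  rw [kappa]
  split_ifs with h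
  · have hxz : 0 < dist x z := dist_pos.2 h.2.2
    have hyz : 0 < dist y z := dist_pos.2 h.2.1
    have hinf : infDist z (lineThrough x y) ≤ dist y z :=
      dist_comm y z ▸ infDist_le_dist_of_mem right_mem_lineThrough
    calc ENNReal.ofReal (2 * infDist z (lineThrough x y) / (‖x - z‖ * ‖y - z‖))
        ≤ ENNReal.ofReal (2 * dist y z / (dist x z * dist y z)) := by
          rw [← dist_eq_norm, ← dist_eq_norm]
          gcongr
      _ = 2 / edist x z := by
          rw [mul_div_mul_right _ _ hyz.ne', ENNReal.ofReal_div_of_pos hxz, edist_dist,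
            ENNReal.ofReal_ofNat]
  · exact zero_le

lemma kappa_le_two_div_edist_right : kappa x y z ≤ 2 / edist y z :=
  kappa_comm.trans_le kappa_le_two_div_edist_left

lemma kappa_single_single_single (i : Fin d) (r s t : ℝ) :
    kappa (EuclideanSpace.single i r) (EuclideanSpace.single i s) (EuclideanSpace.single i t) =
      0 := by
  rcases eq_or_ne r s with rfl | hrs
  · simp [kappa]
  · refine kappa_eq_zero_of_mem_lineThrough ⟨(t - r) / (s - r), ?_⟩
    have hsr : s - r ≠ 0 := sub_ne_zero.2 hrs.symm
    ext j
    rcases eq_or_ne j i with rfl | hji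
    · simp [hsr]
    · simp [hji]

end Kappa

section Energy

variable {d : ℕ} {p α : ℝ} {X Y : Set (EuclideanSpace ℝ (Fin d))}

lemma energyM_mono (hXY : X ⊆ Y) : energyM p α X ≤ energyM p α Y := by
  unfold energyM
  gcongr

lemma energyM_le_of_kappa_rpow_le {W : EuclideanSpace ℝ (Fin d) → ℝ≥0∞} (hW : Measurable W)
    {C : ℝ≥0∞} (hκ : ∀ x ∈ X, ∀ y ∈ X, ∀ z ∈ X, kappa x y z ^ p ≤ C * (W x * W y * W z)) :
    energyM p α X ≤ C * (∫⁻ x in X, W x ∂μH[α]) ^ 3 := by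
  set I := ∫⁻ x in X, W x ∂μH[α]
  have integral_mul_W (B : ℝ≥0∞) : ∫⁻ x in X, B * W x ∂μH[α] = B * I := lintegral_const_mul B hW
  have integral_x_le (z) (hz : z ∈ X) (y) (hy : y ∈ X) :
      ∫⁻ x in X, kappa x y z ^ p ∂μH[α] ≤ C * W z * I * W y :=
    calc ∫⁻ x in X, kappa x y z ^ p ∂μH[α] ≤ ∫⁻ x in X, C * W z * W y * W x ∂μH[α] :=
          setLIntegral_mono (hW.const_mul _) fun x hx ↦ (hκ x hx y hy z hz).trans_eq (by ring)
      _ = C * W z * I * W y := by rw [integral_mul_W]; ring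
  have integral_yx_le (z) (hz : z ∈ X) :
      ∫⁻ y in X, ∫⁻ x in X, kappa x y z ^ p ∂μH[α] ∂μH[α] ≤ C * I ^ 2 * W z :=
    calc ∫⁻ y in X, ∫⁻ x in X, kappa x y z ^ p ∂μH[α] ∂μH[α]
        ≤ ∫⁻ y in X, C * W z * I * W y ∂μH[α] :=
          setLIntegral_mono (hW.const_mul _) (integral_x_le z hz)
      _ = C * I ^ 2 * W z := by rw [integral_mul_W]; ring
  calc energyM p α X ≤ ∫⁻ z in X, C * I ^ 2 * W z ∂μH[α] :=
        setLIntegral_mono (hW.const_mul _) integral_yx_le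
    _ = C * I ^ 3 := by rw [integral_mul_W]; ring

end Energy

section Potential

/-- The potential `1 + ‖x‖ ^ (-s)`, the integrable majorant of powers of the curvature. The
summand `1` makes every factor of a product of potentials dominate the constant function `1`. -/
def potential {E : Type*} [NormedAddCommGroup E] (s : ℝ) (x : E) : ℝ≥0∞ := 1 + ‖x‖ₑ ^ (-s)

variable {E : Type*} [NormedAddCommGroup E]

lemma one_le_potential (s : ℝ) (x : E) : 1 ≤ potential s x := le_self_add

lemma enorm_rpow_neg_le_potential (s : ℝ) (x : E) : ‖x‖ₑ ^ (-s) ≤ potential s x := le_add_self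

lemma measurable_potential [MeasurableSpace E] [BorelSpace E] (s : ℝ) :
    Measurable (potential s : E → ℝ≥0∞) := by
  unfold potential
  fun_prop

end Potential

lemma ennreal_rpow_neg_le_of_le_mul_rpow {u v K : ℝ≥0∞} {p q : ℝ} (hp : 0 ≤ p) (hq : 0 < q)
    (hv₀ : v ≠ 0) (hv : v ≠ ⊤) (huv : v ≤ K * u ^ q) :
    u ^ (-p) ≤ K ^ (p / q) * v ^ (-(p / q)) := by
  have hs : 0 ≤ p / q := by positivity
  have hvs : v ^ (p / q) ≤ K ^ (p / q) * u ^ p := by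
    calc v ^ (p / q) ≤ (K * u ^ q) ^ (p / q) := by gcongr
      _ = K ^ (p / q) * u ^ p := by
        rw [ENNReal.mul_rpow_of_nonneg _ _ hs, ← ENNReal.rpow_mul, mul_div_cancel₀ _ hq.ne']
  rw [ENNReal.rpow_neg, ENNReal.rpow_neg, ← div_eq_mul_inv,
    ENNReal.le_div_iff_mul_le (by simp [hv₀, hv]) (by simp [hv₀, hv, hs])]
  calc (u ^ p)⁻¹ * v ^ (p / q) ≤ (u ^ p)⁻¹ * (K ^ (p / q) * u ^ p) := by gcongr
    _ = K ^ (p / q) * ((u ^ p)⁻¹ * u ^ p) := by ring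
    _ ≤ K ^ (p / q) := mul_le_of_le_one_right' (ENNReal.inv_mul_le_one _)

section Sequence

variable {a : ℕ → ℝ} {q : ℝ}

lemma exists_forall_lt_le_mul_rpow (ha : ∀ n, 0 < a n) (hanti : Antitone a)
    (hdecay : (fun n ↦ a (n + 1)) =O[atTop] fun n ↦ a n ^ q) :
    ∃ K, 0 ≤ K ∧ ∀ m n, m < n → a n ≤ K * a m ^ q := by
  obtain ⟨K, hK, hbound⟩ := Asymptotics.bound_of_isBigO_nat_atTop hdecay
  refine ⟨K, hK.le, fun m n hmn ↦ (hanti hmn).trans ?_⟩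
  have ham : 0 < a m ^ q := Real.rpow_pos_of_pos (ha m) q
  simpa only [Real.norm_of_nonneg (ha _).le, Real.norm_of_nonneg ham.le] using hbound ham.ne'

lemma summable_rpow_of_isBigO_rpow (ha : ∀ n, 0 < a n) (hlim : Tendsto a atTop (𝓝 0))
    (hq : 1 < q) (hdecay : (fun n ↦ a (n + 1)) =O[atTop] fun n ↦ a n ^ q) {r : ℝ} (hr : 0 < r) :
    Summable fun n ↦ a n ^ r := by
  have succ_isLittleO : (fun n ↦ a (n + 1) ^ r) =o[atTop] fun n ↦ a n ^ r := by
    have hpow : (fun n ↦ a n ^ q) =o[atTop] a := by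
      refine (Asymptotics.isLittleO_iff_tendsto' (.of_forall fun n h ↦ absurd h (ha n).ne')).2 ?_
      simp only [← Real.rpow_sub_one (ha _).ne']
      simpa [(sub_pos.2 hq).ne'] using hlim.rpow_const (.inr (sub_pos.2 hq).le)
    exact (hdecay.trans_isLittleO hpow).rpow hr (.of_forall fun n ↦ (ha n).le)
  exact summable_of_ratio_norm_eventually_le one_half_lt_one (succ_isLittleO.bound one_half_pos)

end Sequence

section AxisSegment

variable {d : ℕ}

/-- The segment `[r / 2, r]` on the `i`-th coordinate axis of `ℝᵈ`. -/
def axisSegment (i : Fin d) (r : ℝ) : Set (EuclideanSpace ℝ (Fin d)) :=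
  EuclideanSpace.single i '' Icc (r / 2) r

lemma hausdorffMeasure_axisSegment (i : Fin d) (r : ℝ) :
    μH[1] (axisSegment i r) = ENNReal.ofReal (r / 2) := by
  have hiso : Isometry (EuclideanSpace.single i : ℝ → EuclideanSpace ℝ (Fin d)) :=
    fun s t ↦ PiLp.edist_single_same ..
  rw [axisSegment, hiso.hausdorffMeasure_image (.inl zero_le_one), hausdorffMeasure_real,
    Real.volume_Icc, sub_half]

lemma ofReal_half_le_enorm_of_mem_axisSegment {i : Fin d} {r : ℝ}
    {x : EuclideanSpace ℝ (Fin d)} (hx : x ∈ axisSegment i r) :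
    ENNReal.ofReal (r / 2) ≤ ‖x‖ₑ := by
  obtain ⟨t, ht, rfl⟩ := hx
  rw [← ofReal_norm, PiLp.norm_single]
  exact ENNReal.ofReal_le_ofReal (ht.1.trans (le_abs_self t))

lemma enorm_le_ofReal_of_mem_axisSegment {i : Fin d} {r : ℝ} (hr : 0 ≤ r)
    {x : EuclideanSpace ℝ (Fin d)} (hx : x ∈ axisSegment i r) :
    ‖x‖ₑ ≤ ENNReal.ofReal r := by
  obtain ⟨t, ht, rfl⟩ := hx
  rw [← ofReal_norm, PiLp.norm_single, Real.norm_of_nonneg (by linarith [ht.1])]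
  exact ENNReal.ofReal_le_ofReal ht.2

lemma enorm_le_edist_of_mem_axisSegment {i j : Fin d} (hij : i ≠ j) {r s : ℝ}
    {x z : EuclideanSpace ℝ (Fin d)} (hx : x ∈ axisSegment i r) (hz : z ∈ axisSegment j s) :
    ‖x‖ₑ ≤ edist x z := by
  obtain ⟨t, -, rfl⟩ := hx
  obtain ⟨u, -, rfl⟩ := hz
  simpa [hij, ← ofReal_norm] using
    PiLp.edist_apply_le (EuclideanSpace.single i t) (EuclideanSpace.single j u) i

lemma kappa_eq_zero_of_mem_axisSegment {i : Fin d} {r s t : ℝ} {x y z : EuclideanSpace ℝ (Fin d)}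
    (hx : x ∈ axisSegment i r) (hy : y ∈ axisSegment i s) (hz : z ∈ axisSegment i t) :
    kappa x y z = 0 := by
  obtain ⟨_, -, rfl⟩ := hx
  obtain ⟨_, -, rfl⟩ := hy
  obtain ⟨_, -, rfl⟩ := hz
  exact kappa_single_single_single ..

lemma setLIntegral_potential_axisSegment_le (i : Fin d) {r s : ℝ} (hr : 0 < r) (hs : 0 ≤ s) :
    ∫⁻ x in axisSegment i r, potential s x ∂μH[1] ≤
      ENNReal.ofReal (r / 2) + ENNReal.ofReal ((r / 2) ^ (1 - s)) := by
  have hr₂ : 0 < r / 2 := half_pos hr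
  calc ∫⁻ x in axisSegment i r, potential s x ∂μH[1]
      ≤ ∫⁻ _ in axisSegment i r, (1 + ENNReal.ofReal (r / 2) ^ (-s)) ∂μH[1] := by
        refine setLIntegral_mono measurable_const fun x hx ↦ ?_
        rw [potential, ENNReal.rpow_neg, ENNReal.rpow_neg]
        gcongr
        exact ofReal_half_le_enorm_of_mem_axisSegment hx
    _ = ENNReal.ofReal (r / 2) + ENNReal.ofReal ((r / 2) ^ (1 - s)) := by
        rw [setLIntegral_const, hausdorffMeasure_axisSegment, ENNReal.ofReal_rpow_of_pos hr₂,
          add_mul, one_mul, ← ENNReal.ofReal_mul (by positivity), sub_eq_neg_add,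
          Real.rpow_add hr₂, Real.rpow_one]

end AxisSegment

section AxisSegments

variable {d : ℕ} {a : ℕ → ℝ} {q : ℝ}

lemma exists_enorm_le_mul_enorm_rpow (ha : ∀ n, 0 < a n) (hanti : Antitone a) (hq : 0 ≤ q)
    (hdecay : (fun n ↦ a (n + 1)) =O[atTop] fun n ↦ a n ^ q) (c : ℕ → Fin d) :
    ∃ K ≠ ⊤, ∀ m n, m < n → ∀ x ∈ axisSegment (c m) (a m), ∀ z ∈ axisSegment (c n) (a n),
      ‖z‖ₑ ≤ K * ‖x‖ₑ ^ q := by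
  obtain ⟨K, hK, hbound⟩ := exists_forall_lt_le_mul_rpow ha hanti hdecay
  refine ⟨ENNReal.ofReal (K * 2 ^ q), ENNReal.ofReal_ne_top, fun m n hmn x hx z hz ↦ ?_⟩
  calc ‖z‖ₑ ≤ ENNReal.ofReal (a n) := enorm_le_ofReal_of_mem_axisSegment (ha n).le hz
    _ ≤ ENNReal.ofReal (K * a m ^ q) := ENNReal.ofReal_le_ofReal (hbound m n hmn)
    _ = ENNReal.ofReal (K * 2 ^ q) * ENNReal.ofReal (a m / 2) ^ q := by
        have := ha m
        rw [ENNReal.ofReal_rpow_of_nonneg (by positivity) hq, ← ENNReal.ofReal_mul (by positivity),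
          mul_assoc, ← Real.mul_rpow zero_le_two (by positivity), mul_div_cancel₀ _ two_ne_zero]
    _ ≤ ENNReal.ofReal (K * 2 ^ q) * ‖x‖ₑ ^ q := by
        gcongr
        exact ofReal_half_le_enorm_of_mem_axisSegment hx

lemma exists_edist_rpow_neg_le (ha : ∀ n, 0 < a n) (hanti : Antitone a) {p : ℝ} (hp : 0 ≤ p)
    (hq : 0 < q) (hdecay : (fun n ↦ a (n + 1)) =O[atTop] fun n ↦ a n ^ q) (c : ℕ → Fin d) :
    ∃ C ≠ ⊤, ∀ m n, c m ≠ c n → ∀ x ∈ axisSegment (c m) (a m), ∀ z ∈ axisSegment (c n) (a n),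
      edist x z ^ (-p) ≤ C * (potential (p / q) x * potential (p / q) z) := by
  obtain ⟨K, hK, hbound⟩ := exists_enorm_le_mul_enorm_rpow ha hanti hq.le hdecay c
  refine ⟨K ^ (p / q), ENNReal.rpow_ne_top_of_nonneg (by positivity) hK, ?_⟩
  intro m n hmn x hx z hz
  wlog hlt : m < n generalizing m n x z
  · have hgt : n < m := (not_lt.1 hlt).lt_of_ne fun h ↦ hmn (h ▸ rfl)
    rw [edist_comm, mul_comm (potential _ x)]
    exact this n m hmn.symm z hz x hx hgt
  have hz₀ : ‖z‖ₑ ≠ 0 :=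
    ((ENNReal.ofReal_pos.2 (half_pos (ha n))).trans_le
      (ofReal_half_le_enorm_of_mem_axisSegment hz)).ne'
  calc edist x z ^ (-p) ≤ ‖x‖ₑ ^ (-p) := by
        rw [ENNReal.rpow_neg, ENNReal.rpow_neg]
        gcongr
        exact enorm_le_edist_of_mem_axisSegment hmn hx hz
    _ ≤ K ^ (p / q) * ‖z‖ₑ ^ (-(p / q)) :=
        ennreal_rpow_neg_le_of_le_mul_rpow hp hq hz₀ enorm_ne_top (hbound m n hlt x hx z hz)
    _ ≤ K ^ (p / q) * (potential (p / q) x * potential (p / q) z) := by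
        gcongr
        exact (enorm_rpow_neg_le_potential _ z).trans
          (le_mul_of_one_le_left' (one_le_potential _ x))

lemma lintegral_potential_iUnion_axisSegment_lt_top (ha : ∀ n, 0 < a n)
    (hlim : Tendsto a atTop (𝓝 0)) (hq : 1 < q)
    (hdecay : (fun n ↦ a (n + 1)) =O[atTop] fun n ↦ a n ^ q) (c : ℕ → Fin d)
    {s : ℝ} (hs₀ : 0 ≤ s) (hs₁ : s < 1) :
    ∫⁻ x in ⋃ n, axisSegment (c n) (a n), potential s x ∂μH[1] < ⊤ := by
  have summable_half_rpow {r : ℝ} (hr : 0 < r) : Summable fun n ↦ (a n / 2) ^ r := by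
    simpa only [Real.div_rpow (ha _).le zero_le_two] using
      (summable_rpow_of_isBigO_rpow ha hlim hq hdecay hr).div_const (2 ^ r)
  calc ∫⁻ x in ⋃ n, axisSegment (c n) (a n), potential s x ∂μH[1]
      ≤ ∑' n, ∫⁻ x in axisSegment (c n) (a n), potential s x ∂μH[1] := lintegral_iUnion_le _ _
    _ ≤ ∑' n, (ENNReal.ofReal (a n / 2) + ENNReal.ofReal ((a n / 2) ^ (1 - s))) :=
        ENNReal.tsum_le_tsum fun n ↦ setLIntegral_potential_axisSegment_le (c n) (ha n) hs₀
    _ = ∑' n, ENNReal.ofReal (a n / 2) + ∑' n, ENNReal.ofReal ((a n / 2) ^ (1 - s)) :=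
        ENNReal.tsum_add
    _ < ⊤ := ENNReal.add_lt_top.2
        ⟨by simpa using (summable_half_rpow one_pos).tsum_ofReal_lt_top,
          (summable_half_rpow (sub_pos.2 hs₁)).tsum_ofReal_lt_top⟩

lemma exists_kappa_rpow_le (ha : ∀ n, 0 < a n) (hanti : Antitone a) {p : ℝ} (hp : 0 < p)
    (hq : 0 < q) (hdecay : (fun n ↦ a (n + 1)) =O[atTop] fun n ↦ a n ^ q) (c : ℕ → Fin d) :
    ∃ C ≠ ⊤, ∀ x ∈ ⋃ n, axisSegment (c n) (a n), ∀ y ∈ ⋃ n, axisSegment (c n) (a n),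
      ∀ z ∈ ⋃ n, axisSegment (c n) (a n),
        kappa x y z ^ p ≤
          C * (potential (p / q) x * potential (p / q) y * potential (p / q) z) := by
  obtain ⟨C, hC, hbound⟩ := exists_edist_rpow_neg_le ha hanti hp.le hq hdecay c
  refine ⟨2 ^ p * C, ENNReal.mul_ne_top (by finiteness) hC, fun x hx y hy z hz ↦ ?_⟩
  obtain ⟨l, hx⟩ := mem_iUnion.1 hx
  obtain ⟨m, hy⟩ := mem_iUnion.1 hy
  obtain ⟨n, hz⟩ := mem_iUnion.1 hz
  set W : EuclideanSpace ℝ (Fin d) → ℝ≥0∞ := potential (p / q)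
  have two_div_rpow_le {e B : ℝ≥0∞} (he : e ^ (-p) ≤ C * B) : (2 / e) ^ p ≤ 2 ^ p * C * B := by
    rw [ENNReal.div_rpow_of_nonneg _ _ hp.le, div_eq_mul_inv, ← ENNReal.rpow_neg, mul_assoc]
    gcongr
  by_cases hln : c l = c n
  · by_cases hmn : c m = c n
    · rw [hln] at hx
      rw [hmn] at hy
      rw [kappa_eq_zero_of_mem_axisSegment hx hy hz, ENNReal.zero_rpow_of_pos hp]
      exact zero_le
    · calc kappa x y z ^ p ≤ (2 / edist y z) ^ p := by gcongr; exact kappa_le_two_div_edist_right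
        _ ≤ 2 ^ p * C * (W y * W z) := two_div_rpow_le (hbound m n hmn y hy z hz)
        _ ≤ 2 ^ p * C * (W x * W y * W z) := by
          gcongr
          exact le_mul_of_one_le_left' (one_le_potential _ x)
  · calc kappa x y z ^ p ≤ (2 / edist x z) ^ p := by gcongr; exact kappa_le_two_div_edist_left
      _ ≤ 2 ^ p * C * (W x * W z) := two_div_rpow_le (hbound l n hln x hx z hz)
      _ ≤ 2 ^ p * C * (W x * W y * W z) := by
        gcongr
        exact le_mul_of_one_le_right' (one_le_potential _ y)

theorem Fset_energyM_lt_top_general (ha : ∀ n, 0 < a n) (hanti : Antitone a)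
    (hlim : Tendsto a atTop (𝓝 0)) {p : ℝ} (hp : 0 < p) (hpq : p < q) (hq : 1 < q)
    (hdecay : (fun n ↦ a (n + 1)) =O[atTop] fun n ↦ a n ^ q) (c : ℕ → Fin d) :
    energyM p 1 (⋃ n, axisSegment (c n) (a n)) < ⊤ := by
  have hq₀ : 0 < q := hp.trans hpq
  obtain ⟨C, hC, hκ⟩ := exists_kappa_rpow_le ha hanti hp hq₀ hdecay c
  have hint := lintegral_potential_iUnion_axisSegment_lt_top ha hlim hq hdecay c
    (div_nonneg hp.le hq₀.le) ((div_lt_one hq₀).2 hpq)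
  exact (energyM_le_of_kappa_rpow_le (measurable_potential _) hκ).trans_lt
    (ENNReal.mul_lt_top hC.lt_top (ENNReal.pow_lt_top hint))

end AxisSegments

section Aseq

lemma aseq_pos (n : ℕ) : 0 < aseq n := by
  unfold aseq
  positivity

lemma aseq_le_one (n : ℕ) : aseq n ≤ 1 := inv_le_one_of_one_le₀ (one_le_pow₀ one_le_two)

lemma aseq_succ_le_pow (n : ℕ) : aseq (n + 1) ≤ aseq n ^ (n + 1) := by
  have hexp : n ^ n * n ^ 3 * (n + 1) ≤ (n + 1) ^ (n + 1) * (n + 1) ^ 3 :=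
    calc n ^ n * n ^ 3 * (n + 1) ≤ (n + 1) ^ n * (n + 1) ^ 3 * (n + 1) := by gcongr <;> omega
      _ = (n + 1) ^ (n + 1) * (n + 1) ^ 3 := by ring
  rw [aseq, aseq, inv_pow, ← pow_mul]
  gcongr
  exact one_le_two

lemma antitone_aseq : Antitone aseq :=
  antitone_nat_of_succ_le fun n ↦ (aseq_succ_le_pow n).trans
    (pow_le_of_le_one (aseq_pos n).le (aseq_le_one n) n.succ_ne_zero)

lemma tendsto_aseq : Tendsto aseq atTop (𝓝 0) := by
  have hexp (n : ℕ) : n ≤ n ^ n * n ^ 3 := by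
    rcases n.eq_zero_or_pos with rfl | hn
    · simp
    · exact (Nat.le_self_pow three_ne_zero n).trans (Nat.le_mul_of_pos_left _ (by positivity))
  exact tendsto_inv_atTop_zero.comp
    ((tendsto_pow_atTop_atTop_of_one_lt one_lt_two).comp (tendsto_atTop_mono hexp tendsto_id))

lemma aseq_succ_isBigO_rpow (q : ℝ) :
    (fun n ↦ aseq (n + 1)) =O[atTop] fun n ↦ aseq n ^ q := by
  refine Asymptotics.IsBigO.of_norm_eventuallyLE ?_
  filter_upwards [eventually_ge_atTop ⌈q⌉₊] with n hn
  have hqn : q ≤ (n + 1 : ℕ) := (Nat.ceil_le.1 hn).trans (by simp)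
  rw [Real.norm_of_nonneg (aseq_pos _).le]
  calc aseq (n + 1) ≤ aseq n ^ (n + 1) := aseq_succ_le_pow n
    _ = aseq n ^ ((n + 1 : ℕ) : ℝ) := (Real.rpow_natCast _ _).symm
    _ ≤ aseq n ^ q := Real.rpow_le_rpow_of_exponent_ge (aseq_pos n) (aseq_le_one n) hqn

end Aseq

lemma Fset_subset_iUnion_axisSegment : Fset ⊆ ⋃ n, axisSegment (Fin.ofNat 2 n) (aseq n) := by
  rintro x (⟨n, -, hx₁, hx₀⟩ | ⟨n, hn, hx₀, hx₁⟩)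
  · have haxis : Fin.ofNat 2 (2 * n) = 0 := Fin.ext (Nat.mul_mod_right 2 n)
    refine mem_iUnion.2 ⟨2 * n, x 0, hx₀, ?_⟩
    rw [haxis]
    ext i
    fin_cases i <;> simp [hx₁]
  · have haxis : Fin.ofNat 2 (2 * n - 1) = 1 := Fin.ext (by rw [Fin.val_ofNat, Fin.val_one]; omega)
    refine mem_iUnion.2 ⟨2 * n - 1, x 1, hx₁, ?_⟩
    rw [haxis]
    ext i
    fin_cases i <;> simp [hx₀]

theorem Fset_energyM_lt_top (p : ℝ) (hp : 0 < p) : energyM p 1 Fset < ⊤ :=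
  (energyM_mono Fset_subset_iUnion_axisSegment).trans_lt <|
    Fset_energyM_lt_top_general aseq_pos antitone_aseq tendsto_aseq hp (lt_add_one p)
      (lt_add_of_pos_left 1 hp) (aseq_succ_isBigO_rpow (p + 1)) _

end
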